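/- arXiv:2510.13487 — 2 statements merged into one kernel-verified Lean document; each statement's English description precedes it below -/
import Mathlib

section
/- Let a ≠ 0, ξ ∈ ℝ, and let P_{n,a,ξ}(t) = Hₙ(t)·diag(1,ξ) + n·H_{n−1}(t)·[[0,−a],[−a,a²t]] with Hₙ the physicists' Hermite polynomials. Define the second order operators (acting on the right, D(y) = y''F₂ + y'F₁ + yF₀): D₁(y) = y'' + y'·[[−2t, 2a],[0, −2t]] + y·[[−2,0],[0,0]]; D₂(y) = y''·[[−a²/4, a³t/4],[0,0]] + y'·[[0, aξ/2],[−a/2, a²t/2]] + y·[[0,0],[0,ξ]]; D₃(y) = y''·[[−a²t/2, a³t²/2],[−a/2, a²t/2]] + y'·[[−a²−ξ, a(a²+2ξ)t],[0, ξ]] + y·[[0, ξ(a²+2ξ)/a],[0,0]]; D₄(y) = y''·[[0, −a²/4],[0,0]] + y'·[[a/2, 0],[0, −a/2]] + y·[[0,0],[1,0]]. Then for all u₁,…,u₅ ∈ ℝ and all n ∈ ℕ, the operator D = u₅·Id + Σ_{i=1}^4 uᵢDᵢ satisfies D(P_{n,a,ξ}) = Γₙ·P_{n,a,ξ}, where Γₙ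 = [[−2(n+1)u₁ + u₅, ((n+1)a² + 2ξ)u₃/a],[(na²/2 + ξ)u₄, −2nu₁ + (na²/2 + ξ)u₂ + u₅]]. -/
/-!
Put `h = Hₙ` and `k = n·H_{n-1}`. The classical relations `Hₙ₊₁ = 2t·Hₙ - Hₙ'` and `Hₙ' = 2n·H_{n-1}`
become the linear first order system `h' = 2k`, `k' = 2t·k - n·h`, valid for `n = 0` as well since then
`k = 0` (`hasDerivAt_hermiteH`, `hasDerivAt_lowered`). The entries of `P_{n,a,ξ}` are linear in `h` and
`k` with coefficients polynomial in `t`, so its first two derivatives are as well (`matDeriv_Pher`,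
`matDeriv_matDeriv_Pher`). After substitution, each entry of the eigenvalue equation is an identity that
holds with `h`, `k`, `t`, `n` treated as independent variables.
-/

open MeasureTheory Matrix

noncomputable section

abbrev M2 := Matrix (Fin 2) (Fin 2) ℝ

/-- the `n`-th physicists' Hermite polynomial `Hₙ(t) = (−1)ⁿ e^{t²} (d/dt)ⁿ e^{−t²}`. -/
def H (n : ℕ) (t : ℝ) : ℝ :=
  (-1 : ℝ) ^ n * Real.exp (t ^ 2) * iteratedDeriv n (fun s => Real.exp (-(s ^ 2))) t

/-- the matrix polynomials `P_{n,a,ξ}`. -/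
def Pher (a ξ : ℝ) (n : ℕ) (t : ℝ) : M2 :=
  H n t • Matrix.diagonal ![1, ξ] + ((n : ℝ) * H (n - 1) t) • !![0, -a; -a, a ^ 2 * t]

/-- entrywise derivative of a matrix-valued function. -/
def matDeriv (f : ℝ → M2) : ℝ → M2 :=
  fun t => Matrix.of fun i j => deriv (fun s => f s i j) t

/-- a second order operator `D(y) = y''F₂ + y'F₁ + yF₀` acting on the right. -/
def secondOrd (F₂ F₁ F₀ : ℝ → M2) (y : ℝ → M2) : ℝ → M2 :=
  fun t => matDeriv (matDeriv y) t * F₂ t + matDeriv y t * F₁ t + y t * F₀ t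

/-- `D₁` -/
def D1op (a : ℝ) (y : ℝ → M2) : ℝ → M2 :=
  secondOrd (fun _ => (1 : M2)) (fun t => !![-2 * t, 2 * a; 0, -2 * t])
    (fun _ => !![-2, 0; 0, 0]) y

/-- `D₂` -/
def D2op (a ξ : ℝ) (y : ℝ → M2) : ℝ → M2 :=
  secondOrd (fun t => !![-a ^ 2 / 4, a ^ 3 * t / 4; 0, 0])
    (fun t => !![0, a * ξ / 2; -a / 2, a ^ 2 * t / 2])
    (fun _ => !![0, 0; 0, ξ]) y

/-- `D₃` -/
def D3op (a ξ : ℝ) (y : ℝ → M2) : ℝ → M2 :=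
  secondOrd (fun t => !![-a ^ 2 * t / 2, a ^ 3 * t ^ 2 / 2; -a / 2, a ^ 2 * t / 2])
    (fun t => !![-a ^ 2 - ξ, a * (a ^ 2 + 2 * ξ) * t; 0, ξ])
    (fun _ => !![0, ξ * (a ^ 2 + 2 * ξ) / a; 0, 0]) y

/-- `D₄` -/
def D4op (a : ℝ) (y : ℝ → M2) : ℝ → M2 :=
  secondOrd (fun _ => !![0, -a ^ 2 / 4; 0, 0])
    (fun _ => !![a / 2, 0; 0, -a / 2])
    (fun _ => !![0, 0; 1, 0]) y

/-- The recurrence `Hₙ' = 2t·Hₙ - Hₙ₊₁`, from differentiating Rodrigues' formula. -/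
lemma hasDerivAt_H_succ (n : ℕ) (t : ℝ) :
    HasDerivAt (H n) (2 * t * H n t - H (n + 1) t) t := by
  have hc : ContDiff ℝ ⊤ (fun s : ℝ => Real.exp (-(s ^ 2))) := by fun_prop
  have hd := hc.differentiable_iteratedDeriv n (by exact_mod_cast WithTop.coe_lt_top (n : ℕ∞))
  have h1 := (hd t).hasDerivAt
  rw [← iteratedDeriv_succ] at h1
  have h2 : HasDerivAt (fun s : ℝ => Real.exp (s ^ 2)) (Real.exp (t ^ 2) * (2 * t)) t := by
    simpa using (hasDerivAt_pow 2 t).exp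
  refine ((h2.const_mul ((-1 : ℝ) ^ n)).mul h1).congr_deriv ?_
  simp only [H, pow_succ]
  ring

lemma H_zero (t : ℝ) : H 0 t = 1 := by
  simp [H, ← Real.exp_add]

/-- The lowering relation `Hₙ' = 2n·H_{n-1}`. -/
lemma hasDerivAt_hermiteH (n : ℕ) (t : ℝ) :
    HasDerivAt (H n) (2 * ((n : ℝ) * H (n - 1) t)) t := by
  induction n generalizing t with
  | zero =>
    have h0 : H 0 = fun _ => (1 : ℝ) := funext H_zero
    rw [h0]
    simpa using hasDerivAt_const t (1 : ℝ)
  | succ n ih =>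
    have hrec : H (n + 1) = fun s => 2 * s * H n s - 2 * ((n : ℝ) * H (n - 1) s) := by
      funext s
      have := (hasDerivAt_H_succ n s).unique (ih s)
      linarith
    have hlin : HasDerivAt (fun s : ℝ => 2 * s) 2 t := by
      simpa using (hasDerivAt_id t).const_mul (2 : ℝ)
    have hlow := hasDerivAt_H_succ (n - 1) t
    rw [hrec]
    refine ((hlin.mul (ih t)).sub ((hlow.const_mul (n : ℝ)).const_mul 2)).congr_deriv ?_
    rcases n with _ | m
    · simp
    · simp only [Nat.add_sub_cancel]
      push_cast
      ring

/-- The companion relation for `k = n·H_{n-1}`: `k' = 2t·k - n·Hₙ`. -/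
lemma hasDerivAt_lowered (n : ℕ) (t : ℝ) :
    HasDerivAt (fun s => (n : ℝ) * H (n - 1) s) (2 * t * (n * H (n - 1) t) - n * H n t) t := by
  refine ((hasDerivAt_H_succ (n - 1) t).const_mul (n : ℝ)).congr_deriv ?_
  rcases n with _ | m
  · simp
  · simp only [Nat.add_sub_cancel]
    ring

lemma Pher_eq (a ξ : ℝ) (n : ℕ) (t : ℝ) :
    Pher a ξ n t = !![H n t, -a * (n * H (n - 1) t);
      -a * (n * H (n - 1) t), ξ * H n t + a ^ 2 * t * (n * H (n - 1) t)] := by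
  ext i j
  fin_cases i <;> fin_cases j <;> simp [Pher] <;> ring

lemma matDeriv_of_hasDerivAt {f : ℝ → M2} {p q r s : ℝ → ℝ} {p' q' r' s' t : ℝ}
    (hf : f = fun x => !![p x, q x; r x, s x])
    (hp : HasDerivAt p p' t) (hq : HasDerivAt q q' t) (hr : HasDerivAt r r' t)
    (hs : HasDerivAt s s' t) : matDeriv f t = !![p', q'; r', s'] := by
  subst hf
  ext i j
  fin_cases i <;> fin_cases j
  · exact hp.deriv
  · exact hq.deriv
  · exact hr.deriv
  · exact hs.deriv

/-- Derivative rule for combinations `(α + βt)·h + (γ + δt + εt²)·k` of `h = Hₙ` and `k = n·H_{n-1}`;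
this family contains the entries of `P_{n,a,ξ}` and of its derivative. -/
lemma hasDerivAt_comb (n : ℕ) (α β γ δ ε t : ℝ) :
    HasDerivAt (fun x => (α + β * x) * H n x + (γ + δ * x + ε * x ^ 2) * (n * H (n - 1) x))
      (β * H n t + (α + β * t) * (2 * (n * H (n - 1) t))
        + (δ + 2 * ε * t) * (n * H (n - 1) t)
        + (γ + δ * t + ε * t ^ 2) * (2 * t * (n * H (n - 1) t) - n * H n t)) t := by
  have h1 : HasDerivAt (fun x : ℝ => α + β * x) β t := by
    simpa using ((hasDerivAt_id t).const_mul β).const_add α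
  have h2 : HasDerivAt (fun x : ℝ => γ + δ * x + ε * x ^ 2) (δ + ε * (2 * t)) t := by
    have h3 : HasDerivAt (fun x : ℝ => γ + δ * x) δ t := by
      simpa using ((hasDerivAt_id t).const_mul δ).const_add γ
    exact (h3.add ((hasDerivAt_pow 2 t).const_mul ε)).congr_deriv (by norm_num)
  refine ((h1.mul (hasDerivAt_hermiteH n t)).add (h2.mul (hasDerivAt_lowered n t))).congr_deriv ?_
  ring

lemma matDeriv_Pher (a ξ : ℝ) (n : ℕ) (t : ℝ) :
    matDeriv (Pher a ξ n) t =
      !![2 * (n * H (n - 1) t), -a * (2 * t * (n * H (n - 1) t) - n * H n t);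
        -a * (2 * t * (n * H (n - 1) t) - n * H n t),
        -a ^ 2 * n * t * H n t + (2 * ξ + a ^ 2 + 2 * a ^ 2 * t ^ 2) * (n * H (n - 1) t)] := by
  rw [matDeriv_of_hasDerivAt (f := Pher a ξ n) ?_ (hasDerivAt_comb n 1 0 0 0 0 t)
    (hasDerivAt_comb n 0 0 (-a) 0 0 t) (hasDerivAt_comb n 0 0 (-a) 0 0 t)
    (hasDerivAt_comb n ξ 0 0 (a ^ 2) 0 t)]
  · ext i j
    fin_cases i <;> fin_cases j <;> simp <;> ring
  · funext x
    rw [Pher_eq]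
    ext i j
    fin_cases i <;> fin_cases j <;> simp

lemma matDeriv_matDeriv_Pher (a ξ : ℝ) (n : ℕ) (t : ℝ) :
    matDeriv (matDeriv (Pher a ξ n)) t =
      !![2 * (2 * t * (n * H (n - 1) t) - n * H n t),
        -a * ((2 - 2 * n + 4 * t ^ 2) * (n * H (n - 1) t) - 2 * t * n * H n t);
        -a * ((2 - 2 * n + 4 * t ^ 2) * (n * H (n - 1) t) - 2 * t * n * H n t),
        -a ^ 2 * n * H n t - 2 * a ^ 2 * n * t * (n * H (n - 1) t)
          + 4 * a ^ 2 * t * (n * H (n - 1) t)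
          + (2 * ξ + a ^ 2 + 2 * a ^ 2 * t ^ 2) * (2 * t * (n * H (n - 1) t) - n * H n t)] := by
  rw [matDeriv_of_hasDerivAt (f := matDeriv (Pher a ξ n)) ?_ (hasDerivAt_comb n 0 0 2 0 0 t)
    (hasDerivAt_comb n (a * n) 0 0 (-2 * a) 0 t) (hasDerivAt_comb n (a * n) 0 0 (-2 * a) 0 t)
    (hasDerivAt_comb n 0 (-a ^ 2 * n) (2 * ξ + a ^ 2) 0 (2 * a ^ 2) t)]
  · ext i j
    fin_cases i <;> fin_cases j <;> simp <;> ring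
  · funext x
    rw [matDeriv_Pher]
    ext i j
    fin_cases i <;> fin_cases j <;> simp <;> ring

/-- For all `u₁,…,u₅`, the polynomials `P_{n,a,ξ}` are eigenfunctions of
the operator `D = u₅·Id + ∑ uᵢDᵢ` with the explicit matrix eigenvalue `Γₙ`. -/
theorem hermite_type_eigenfunctions (a ξ : ℝ) (ha : a ≠ 0) :
    ∀ (u₁ u₂ u₃ u₄ u₅ : ℝ) (n : ℕ) (t : ℝ),
      u₅ • Pher a ξ n t
        + u₁ • D1op a (Pher a ξ n) t
        + u₂ • D2op a ξ (Pher a ξ n) t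
        + u₃ • D3op a ξ (Pher a ξ n) t
        + u₄ • D4op a (Pher a ξ n) t
      = !![-2 * ((n : ℝ) + 1) * u₁ + u₅, (((n : ℝ) + 1) * a ^ 2 + 2 * ξ) * u₃ / a;
          ((n : ℝ) * a ^ 2 / 2 + ξ) * u₄,
            -2 * (n : ℝ) * u₁ + ((n : ℝ) * a ^ 2 / 2 + ξ) * u₂ + u₅]
        * Pher a ξ n t := by
  intro u₁ u₂ u₃ u₄ u₅ n t
  simp only [D1op, D2op, D3op, D4op, secondOrd, matDeriv_matDeriv_Pher, matDeriv_Pher, Pher_eq]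
  -- From here on only the values of `Hₙ` and `n·H_{n-1}` at `t` matter.
  generalize (n : ℝ) * H (n - 1) t = k
  generalize H n t = h
  generalize (n : ℝ) = N
  ext i j
  fin_cases i <;> fin_cases j <;>
    simp [Matrix.mul_apply, Fin.sum_univ_two] <;> field_simp <;> ring
end
end

section
/- Let a ∈ ℝ with a² > 2 and set ξ = 1 − a². Let P_{n}(t) = Hₙ(t)·diag(1,ξ) + n·H_{n−1}(t)·[[0,−a],[−a,a²t]] (physicists' Hermite Hₙ), so that P₁(t) = [[2t, −a],[−a, (2−a²)t]] and P₁'(t) = diag(2, 2−a²). Define 𝒜(y) = −y + y'·(P₁')⁻¹·P₁ and 𝒫ₙ = 𝒜(Pₙ). Then 𝒫₁ = 0, and for every n ∈ ℕ with n ≠ 1, 𝒫ₙ is a matrix polynomial of degree exactly n whose leading coefficient equals (n−1)·2^{n−1}·diag(2, (n−2)a² + 2), which is nonsingular. -/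
/-!
The Hermite functions `H n` are polynomials with leading coefficient `2ⁿ` and `Hₙ' = 2n Hₙ₋₁`
(`H_eq_eval`, `hermitePoly_coeff_self`, `derivative_hermitePoly_succ`). Since `P₁' = diag(2, 2 − a²)`
is a constant invertible matrix, `(P₁')⁻¹ P₁` equals `[[t, −a/2], [−a/(2 − a²), t]]`. Writing `h = Hₙ`
and `g = n Hₙ₋₁`, so that `h' = 2g`, expanding `𝒜(Pₙ)` entrywise gives `transformPoly`, which involves
only `h`, `g` and `g'`. The entries contain `h`, `t g`, `t² g'` on the diagonal, of degree `n`, while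
off the diagonal the `g` terms cancel and only multiples of `t g'`, of degree less than `n`,
survive. Reading off the top coefficients gives the claim. The resulting diagonal matrix is
invertible because `(n − 2) a² + 2` is positive for `n ≥ 2` and equals `2 − 2a² ≠ 0` for `n = 0`.
-/

open MeasureTheory Matrix Polynomial

noncomputable section

/-- `𝒜(y) = −y + y'·(P₁')⁻¹·P₁`, with `ξ = 1 − a²`. -/
def Acal (a : ℝ) (y : ℝ → M2) : ℝ → M2 :=
  fun t => -(y t)
    + matDeriv y t * ((matDeriv (Pher a (1 - a ^ 2) 1) t)⁻¹ * Pher a (1 - a ^ 2) 1 t)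

/-- The physicists' Hermite polynomials as formal polynomials, defined by the recurrence
`Hₙ₊₁ = 2X Hₙ − Hₙ'`. (Mathlib's `Polynomial.hermite` is the probabilists' family.) -/
def hermitePoly : ℕ → ℝ[X]
  | 0 => 1
  | n + 1 => C 2 * (X * hermitePoly n) - derivative (hermitePoly n)

lemma hermitePoly_succ (n : ℕ) :
    hermitePoly (n + 1) = C 2 * (X * hermitePoly n) - derivative (hermitePoly n) := rfl

/-- The recurrence defining `hermitePoly` is the product rule applied to `Hₙ(t) e^{−t²}`. -/
lemma iteratedDeriv_gaussian (n : ℕ) :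
    iteratedDeriv n (fun s : ℝ => Real.exp (-(s ^ 2)))
      = fun t => (-1 : ℝ) ^ n * ((hermitePoly n).eval t * Real.exp (-(t ^ 2))) := by
  induction n with
  | zero => funext t; simp [hermitePoly]
  | succ n ih =>
    rw [iteratedDeriv_succ, ih]
    funext t
    have he : HasDerivAt (fun s : ℝ => Real.exp (-(s ^ 2)))
        (Real.exp (-(t ^ 2)) * (-(2 * t))) t := by
      have h := ((hasDerivAt_pow 2 t).neg).exp
      simpa using h
    have h := (((hermitePoly n).hasDerivAt t).mul he).const_mul ((-1 : ℝ) ^ n)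
    refine h.deriv.trans ?_
    simp only [hermitePoly_succ, eval_sub, eval_mul, eval_C, eval_X]
    ring

lemma H_eq_eval (n : ℕ) (t : ℝ) : H n t = (hermitePoly n).eval t := by
  have h1 : ((-1 : ℝ) ^ n) * (-1) ^ n = 1 := by
    rw [← mul_pow]; norm_num
  have h2 : Real.exp (t ^ 2) * Real.exp (-(t ^ 2)) = 1 := by
    rw [← Real.exp_add]; simp
  rw [H, iteratedDeriv_gaussian]
  linear_combination ((hermitePoly n).eval t * Real.exp (t ^ 2) * Real.exp (-(t ^ 2))) * h1
    + (hermitePoly n).eval t * h2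

lemma derivative_hermitePoly_succ (n : ℕ) :
    derivative (hermitePoly (n + 1)) = C (2 * ((n : ℝ) + 1)) * hermitePoly n := by
  induction n with
  | zero => simp [hermitePoly]
  | succ n ih =>
    rw [hermitePoly_succ (n + 1)]
    simp only [derivative_sub, derivative_mul, derivative_C, derivative_X, ih]
    rw [hermitePoly_succ n]
    simp only [Nat.cast_add, Nat.cast_one, C_mul, C_add, C_1]
    ring

lemma hermitePoly_coeff_of_lt (n : ℕ) : ∀ k, n < k → (hermitePoly n).coeff k = 0 := by
  induction n with
  | zero =>
    intro k hk
    simp [hermitePoly, coeff_one, hk.ne']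
  | succ n ih =>
    intro k hk
    obtain ⟨j, rfl⟩ : ∃ j, k = j + 1 := ⟨k - 1, by omega⟩
    rw [hermitePoly_succ, coeff_sub, coeff_C_mul, coeff_X_mul, coeff_derivative,
      ih j (by omega), ih (j + 1 + 1) (by omega)]
    ring

lemma hermitePoly_coeff_self (n : ℕ) : (hermitePoly n).coeff n = 2 ^ n := by
  induction n with
  | zero => simp [hermitePoly]
  | succ n ih =>
    rw [hermitePoly_succ, coeff_sub, coeff_C_mul, coeff_X_mul, coeff_derivative, ih,
      hermitePoly_coeff_of_lt n (n + 1 + 1) (by omega)]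
    ring

/-- The polynomial `n Hₙ₋₁`, half the derivative of `Hₙ`; it is `0` for `n = 0`. -/
def halfDeriv (n : ℕ) : ℝ[X] := C (n : ℝ) * hermitePoly (n - 1)

lemma derivative_hermitePoly (n : ℕ) : derivative (hermitePoly n) = C 2 * halfDeriv n := by
  cases n with
  | zero => simp [hermitePoly, halfDeriv]
  | succ n =>
    rw [derivative_hermitePoly_succ, halfDeriv, ← mul_assoc, ← C_mul]
    simp

/-- The matrix `P_{n,a,ξ}` with polynomial entries. -/
def pherPoly (a ξ : ℝ) (n : ℕ) : Matrix (Fin 2) (Fin 2) ℝ[X] :=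
  !![hermitePoly n, C (-a) * halfDeriv n;
     C (-a) * halfDeriv n, C ξ * hermitePoly n + C (a ^ 2) * (X * halfDeriv n)]

lemma Pher_apply (a ξ : ℝ) (n : ℕ) (t : ℝ) (i j : Fin 2) :
    Pher a ξ n t i j = (pherPoly a ξ n i j).eval t := by
  fin_cases i <;> fin_cases j <;> simp [Pher, pherPoly, halfDeriv, H_eq_eval] <;> ring

lemma matDeriv_Pher_s14 (a ξ : ℝ) (n : ℕ) (t : ℝ) :
    matDeriv (Pher a ξ n) t = Matrix.of fun i j => (derivative (pherPoly a ξ n i j)).eval t := by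
  ext i j
  simp only [matDeriv, Matrix.of_apply, Pher_apply, Polynomial.deriv]

/-- The derivative `P₁'` is the constant matrix `diag(2, 2 − a²)`, invertible because `a² ≠ 2`, so the
right-hand factor of `𝒜` is itself a matrix polynomial in `t`. -/
lemma inv_mul_Pher_one (a : ℝ) (ha : 2 - a ^ 2 ≠ 0) (t : ℝ) :
    (matDeriv (Pher a (1 - a ^ 2) 1) t)⁻¹ * Pher a (1 - a ^ 2) 1 t
      = !![t, -a / 2; -a / (2 - a ^ 2), t] := by
  have hd : matDeriv (Pher a (1 - a ^ 2) 1) t = !![2, 0; 0, 2 - a ^ 2] := by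
    rw [matDeriv_Pher_s14]
    ext i j
    fin_cases i <;> fin_cases j <;> simp [-map_pow, -map_sub, pherPoly, halfDeriv, hermitePoly]
    ring
  have hP : Pher a (1 - a ^ 2) 1 t = !![2 * t, -a; -a, (2 - a ^ 2) * t] := by
    ext i j
    rw [Pher_apply]
    fin_cases i <;> fin_cases j <;> simp [-map_pow, -map_sub, pherPoly, halfDeriv, hermitePoly]
    ring
  have hi : (!![2, 0; 0, 2 - a ^ 2] : M2)⁻¹ = !![1 / 2, 0; 0, 1 / (2 - a ^ 2)] := by
    apply Matrix.inv_eq_right_inv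
    ext i j
    fin_cases i <;> fin_cases j <;> simp [Matrix.mul_apply, Fin.sum_univ_two, ha]
  rw [hd, hP, hi]
  ext i j
  fin_cases i <;> fin_cases j <;> simp [Matrix.mul_apply, Fin.sum_univ_two] <;> field_simp

/-- The matrix `𝒫ₙ` with polynomial entries, after the cancellations that use `h' = 2g` for
`h = Hₙ`, `g = n Hₙ₋₁`. -/
def transformPoly (a : ℝ) (n : ℕ) : Matrix (Fin 2) (Fin 2) ℝ[X] :=
  !![-hermitePoly n + C 2 * (X * halfDeriv n)
        + C (a ^ 2 / (2 - a ^ 2)) * derivative (halfDeriv n),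
     C (-a) * (X * derivative (halfDeriv n));
     C (-a - a ^ 3 / (2 - a ^ 2)) * (X * derivative (halfDeriv n)),
     C (a ^ 2 - 1) * hermitePoly n + C (2 - 2 * a ^ 2) * (X * halfDeriv n)
        + C (a ^ 2 / 2) * derivative (halfDeriv n)
        + C (a ^ 2) * (X * (X * derivative (halfDeriv n)))]

lemma Acal_Pher (a : ℝ) (ha : 2 - a ^ 2 ≠ 0) (n : ℕ) (t : ℝ) :
    Acal a (Pher a (1 - a ^ 2) n) t = Matrix.of fun i j => (transformPoly a n i j).eval t := by
  rw [Acal, inv_mul_Pher_one a ha, matDeriv_Pher_s14]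
  ext i j
  rw [Matrix.add_apply, Matrix.neg_apply, Pher_apply]
  fin_cases i <;> fin_cases j <;>
    simp [-map_pow, -map_sub, pherPoly, transformPoly, Matrix.mul_apply, Fin.sum_univ_two,
      derivative_hermitePoly] <;> field_simp <;> ring

lemma transformPoly_zero (a : ℝ) : transformPoly a 0 = !![-1, 0; 0, C (a ^ 2 - 1)] := by
  simp [transformPoly, halfDeriv, hermitePoly]

lemma halfDeriv_add_two (m : ℕ) :
    halfDeriv (m + 2) = C ((m : ℝ) + 2) * hermitePoly (m + 1) := by
  simp [halfDeriv]

lemma derivative_halfDeriv_add_two (m : ℕ) :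
    derivative (halfDeriv (m + 2)) = C (2 * ((m : ℝ) + 2) * ((m : ℝ) + 1)) * hermitePoly m := by
  rw [halfDeriv_add_two, derivative_C_mul, derivative_hermitePoly_succ, ← mul_assoc, ← C_mul]
  congr 2
  ring

lemma transformPoly_coeff_of_lt (a : ℝ) (m k : ℕ) (hk : m + 2 < k) (i j : Fin 2) :
    (transformPoly a (m + 2) i j).coeff k = 0 := by
  obtain ⟨l, rfl⟩ : ∃ l, k = l + 2 := ⟨k - 2, by omega⟩
  have h0 := hermitePoly_coeff_of_lt m l (by omega)
  have h1 := hermitePoly_coeff_of_lt m (l + 1) (by omega)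
  have h2 := hermitePoly_coeff_of_lt m (l + 2) (by omega)
  have h3 := hermitePoly_coeff_of_lt (m + 1) (l + 1) (by omega)
  have h4 := hermitePoly_coeff_of_lt (m + 2) (l + 2) (by omega)
  simp only [Matrix.of_apply, transformPoly, derivative_halfDeriv_add_two]
  simp only [halfDeriv_add_two]
  fin_cases i <;> fin_cases j <;>
    simp [-map_mul, -map_add, -map_sub, -map_neg, -map_pow, -map_natCast, coeff_C_mul, coeff_X_mul,
      h0, h1, h2, h3, h4]

lemma transformPoly_coeff_self (a : ℝ) (m : ℕ) :
    (Matrix.of fun i j => (transformPoly a (m + 2) i j).coeff (m + 2))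
      = (((m : ℝ) + 1) * 2 ^ (m + 1)) • Matrix.diagonal ![2, (m : ℝ) * a ^ 2 + 2] := by
  have h0 := hermitePoly_coeff_self m
  have h1 := hermitePoly_coeff_of_lt m (m + 1) (by omega)
  have h2 := hermitePoly_coeff_of_lt m (m + 2) (by omega)
  have h3 := hermitePoly_coeff_self (m + 1)
  have h4 := hermitePoly_coeff_self (m + 2)
  ext i j
  simp only [Matrix.of_apply, transformPoly, derivative_halfDeriv_add_two]
  simp only [halfDeriv_add_two]
  fin_cases i <;> fin_cases j <;>
    simp [-map_mul, -map_add, -map_sub, -map_neg, -map_pow, -map_natCast, coeff_C_mul, coeff_X_mul,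
      h0, h1, h2, h3, h4] <;> ring

lemma isUnit_smul_diagonal (c x y : ℝ) (hc : c ≠ 0) (hx : x ≠ 0) (hy : y ≠ 0) :
    IsUnit (c • Matrix.diagonal ![x, y] : M2) := by
  rw [Matrix.isUnit_iff_isUnit_det, Matrix.det_smul, Matrix.det_diagonal]
  simp [hc, hx, hy]

/-- For `a² > 2` and `ξ = 1−a²`, the quasi-Darboux transform
`𝒫ₙ = 𝒜(Pₙ)` vanishes identically for `n = 1`, while for `n ≠ 1` it is a matrix
polynomial of degree exactly `n` with nonsingular leading coefficient
`(n−1)·2^{n−1}·diag(2, (n−2)a² + 2)`. -/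
theorem quasi_darboux_hermite_degrees (a : ℝ) (ha : a ^ 2 > 2) :
    (∀ t : ℝ, Acal a (Pher a (1 - a ^ 2) 1) t = 0) ∧
    (∀ n : ℕ, n ≠ 1 →
      ∃ Q : Matrix (Fin 2) (Fin 2) (Polynomial ℝ),
        (∀ t : ℝ, Acal a (Pher a (1 - a ^ 2) n) t
            = Matrix.of fun i j => (Q i j).eval t) ∧
        (∀ i j, (Q i j).degree ≤ (n : ℕ)) ∧
        (Matrix.of fun i j => (Q i j).coeff n)
          = (((n : ℝ) - 1) * (2 : ℝ) ^ ((n : ℤ) - 1)) •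
              Matrix.diagonal ![2, ((n : ℝ) - 2) * a ^ 2 + 2] ∧
        IsUnit (Matrix.of fun i j => (Q i j).coeff n)) := by
  have hd : 2 - a ^ 2 ≠ 0 := by linarith
  refine ⟨fun t => ?_, fun n hn => ⟨transformPoly a n, Acal_Pher a hd n, ?_⟩⟩
  · rw [Acal_Pher a hd]
    ext i j
    fin_cases i <;> fin_cases j <;>
      simp [transformPoly, halfDeriv, hermitePoly]
    ring
  · obtain rfl | ⟨m, rfl⟩ : n = 0 ∨ ∃ m, n = m + 2 := by
      rcases n with _ | _ | m
      · exact Or.inl rfl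
      · exact absurd rfl hn
      · exact Or.inr ⟨m, rfl⟩
    · have hc : (Matrix.of fun i j => (transformPoly a 0 i j).coeff 0)
          = ((((0 : ℕ) : ℝ) - 1) * (2 : ℝ) ^ (((0 : ℕ) : ℤ) - 1)) •
              Matrix.diagonal ![2, (((0 : ℕ) : ℝ) - 2) * a ^ 2 + 2] := by
        rw [transformPoly_zero]
        ext i j
        fin_cases i <;> fin_cases j <;> simp [-map_sub]
        ring
      refine ⟨fun i j => ?_, hc, ?_⟩
      · rw [transformPoly_zero]
        fin_cases i <;> fin_cases j <;>
          simp [-map_sub, degree_C_le]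
      · rw [hc]
        refine isUnit_smul_diagonal _ _ _ (by norm_num) two_ne_zero ?_
        push_cast
        linarith
    · have hz : (2 : ℝ) ^ (((m + 2 : ℕ) : ℤ) - 1) = 2 ^ (m + 1) := by
        rw [← zpow_natCast]
        congr 1
        push_cast
        ring
      have hc : (Matrix.of fun i j => (transformPoly a (m + 2) i j).coeff (m + 2))
          = ((((m + 2 : ℕ) : ℝ) - 1) * (2 : ℝ) ^ (((m + 2 : ℕ) : ℤ) - 1)) •
              Matrix.diagonal ![2, (((m + 2 : ℕ) : ℝ) - 2) * a ^ 2 + 2] := by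
        rw [hz, transformPoly_coeff_self]
        push_cast
        rw [show (m : ℝ) + 2 - 1 = m + 1 by ring, add_sub_cancel_right]
      refine ⟨fun i j => ?_, hc, ?_⟩
      · rw [degree_le_iff_coeff_zero]
        intro k hk
        exact transformPoly_coeff_of_lt a m k (by exact_mod_cast hk) i j
      · rw [transformPoly_coeff_self]
        exact isUnit_smul_diagonal _ _ _ (by positivity) two_ne_zero (by positivity)
end
end
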